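/- Let G be a graph on n vertices with λ(G) ≥ n − 1. Then ρ(G) = P(G^c) − 1, where G^c is the complement of G. -/

import Mathlib

namespace PaperPC

open SimpleGraph

variable {V : Type*}

/-- The degree of a vertex, via the cardinality of its neighbor set. -/
noncomputable def ndeg (G : SimpleGraph V) (v : V) : ℕ := (G.neighborSet v).ncard

/-- A linear forest: an acyclic graph of maximum degree at most 2,
i.e. a vertex-disjoint union of paths.  A spanning linear subforest of `G`
is exactly a path covering of `G` (isolated vertices are one-vertex paths). -/
def IsLinearForest (H : SimpleGraph V) : Prop :=
  H.IsAcyclic ∧ ∀ v, ndeg H v ≤ 2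

/-- The number of paths of a path covering = number of connected components. -/
noncomputable def numPaths (H : SimpleGraph V) : ℕ := Nat.card H.ConnectedComponent

/-- The path covering number `P(G)`. -/
noncomputable def pathCoverNumber (G : SimpleGraph V) : ℕ :=
  sInf {k | ∃ H ≤ G, IsLinearForest H ∧ numPaths H = k}

/-- `H` is a minimum path covering of `G`. -/
def IsMinPathCover (G H : SimpleGraph V) : Prop :=
  H ≤ G ∧ IsLinearForest H ∧ numPaths H = pathCoverNumber G

open scoped Classical in
/-- The path sequence of a path covering: the multiset of the numbers of vertices
of its paths (a multiset encodes the nondecreasing ordered sequence). -/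
noncomputable def pathSeq [Fintype V] (H : SimpleGraph V) : Multiset ℕ :=
  (Finset.univ : Finset H.ConnectedComponent).val.map fun c => c.supp.ncard

/-- `G` admits a unique path sequence. -/
def UniquePathSequence [Fintype V] (G : SimpleGraph V) : Prop :=
  ∀ H₁ H₂ : SimpleGraph V, IsMinPathCover G H₁ → IsMinPathCover G H₂ →
    pathSeq H₁ = pathSeq H₂

/-- Number of leaves (vertices of degree 1). -/
noncomputable def numLeaves (G : SimpleGraph V) : ℕ := {v | ndeg G v = 1}.ncard

/-- Number of heavy edges (edges both of whose endpoints have degree > 2). -/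
noncomputable def numHeavyEdges (G : SimpleGraph V) : ℕ :=
  {e ∈ G.edgeSet | ∀ v ∈ e, 2 < ndeg G v}.ncard

/-- Number of edges. -/
noncomputable def numEdges (G : SimpleGraph V) : ℕ := G.edgeSet.ncard

/-- A graph is 2-sparse if no two adjacent vertices both have degree > 2. -/
def TwoSparse (G : SimpleGraph V) : Prop :=
  ∀ u v, G.Adj u v → ndeg G u ≤ 2 ∨ ndeg G v ≤ 2

/-- `G` is a path graph. -/
def IsPathGraph (G : SimpleGraph V) : Prop := G.IsTree ∧ ∀ v, ndeg G v ≤ 2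

/-- `G` is a cycle graph. -/
def IsCycleGraph (G : SimpleGraph V) : Prop := G.Connected ∧ ∀ v, ndeg G v = 2

/-- A generalized star: a tree with exactly one heavy vertex (the center) in which
all vines have the same number of vertices (equivalently, all leaves are at the same
distance from the center). -/
def IsGenStar (G : SimpleGraph V) : Prop :=
  G.IsTree ∧ ∃ c k, 2 < ndeg G c ∧ (∀ v, v ≠ c → ndeg G v ≤ 2) ∧
    ∀ v, ndeg G v = 1 → G.dist c v = k

/-- An L(2,1)-labeling. -/
def IsL21Labeling (G : SimpleGraph V) (f : V → ℕ) : Prop :=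
  (∀ u v, G.Adj u v → 2 ≤ Nat.dist (f u) (f v)) ∧
  (∀ u v, G.dist u v = 2 → 1 ≤ Nat.dist (f u) (f v))

/-- `λ(G)`: the least `k` such that `G` has an L(2,1)-labeling with labels in `{0,…,k}`. -/
noncomputable def lambdaNum (G : SimpleGraph V) : ℕ :=
  sInf {k | ∃ f : V → ℕ, IsL21Labeling G f ∧ ∀ v, f v ≤ k}

/-- A λ-labeling: an L(2,1)-labeling with maximum label `λ(G)`. -/
def IsLambdaLabeling (G : SimpleGraph V) (f : V → ℕ) : Prop :=
  IsL21Labeling G f ∧ (∀ v, f v ≤ lambdaNum G) ∧ ∃ v, f v = lambdaNum G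

/-- The set of holes of a labeling: unused labels `h` with `1 ≤ h ≤ λ(G) - 1`. -/
def labHoles (G : SimpleGraph V) (f : V → ℕ) : Set ℕ :=
  {h | 1 ≤ h ∧ h + 1 ≤ lambdaNum G ∧ ∀ v, f v ≠ h}

/-- The hole index `ρ(G)`: minimum number of holes over all λ-labelings. -/
noncomputable def holeIndex (G : SimpleGraph V) : ℕ :=
  sInf {k | ∃ f : V → ℕ, IsLambdaLabeling G f ∧ (labHoles G f).ncard = k}

open scoped Classical in
/-- The island sequence of a labeling: the multiset of cardinalities of the maximal
intervals `[a,b]` of consecutive integers all used by the labeling. -/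
noncomputable def islandSeq [Fintype V] (G : SimpleGraph V) (f : V → ℕ) : Multiset ℕ :=
  (((Finset.range (lambdaNum G + 1)) ×ˢ (Finset.range (lambdaNum G + 1))).filter
    (fun q => q.1 ≤ q.2 ∧ (∀ x ∈ Finset.Icc q.1 q.2, ∃ v, f v = x) ∧
      (q.1 = 0 ∨ ∀ v, f v ≠ q.1 - 1) ∧ ∀ v, f v ≠ q.2 + 1)).val.map
    fun q => q.2 - q.1 + 1

/-- `G` admits (at least) two distinct island sequences. -/
def MultipleIslandSequences [Fintype V] (G : SimpleGraph V) : Prop :=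
  ∃ f g : V → ℕ, IsLambdaLabeling G f ∧ IsLambdaLabeling G g ∧
    (labHoles G f).ncard = holeIndex G ∧ (labHoles G g).ncard = holeIndex G ∧
    islandSeq G f ≠ islandSeq G g

/-- A vine: a maximal path one of whose endpoints (`a`) is a leaf and all of whose
vertices are light.  Maximality: any light vertex adjacent to the other end already
lies on the path. -/
def IsVine (G : SimpleGraph V) {a b : V} (p : G.Walk a b) : Prop :=
  p.IsPath ∧ ndeg G a = 1 ∧ (∀ v ∈ p.support, ndeg G v ≤ 2) ∧
  ∀ c, G.Adj b c → ndeg G c ≤ 2 → c ∈ p.support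

/-- A vine with center `v`: the (heavy) vertex adjacent to the non-leaf end of the vine. -/
def IsVineWithCenter (G : SimpleGraph V) {a b : V} (p : G.Walk a b) (v : V) : Prop :=
  IsVine G p ∧ G.Adj b v ∧ 2 < ndeg G v

/-- The matching number of the subgraph of `G` induced by `S`. -/
noncomputable def matchingNumberOn (G : SimpleGraph V) (S : Set V) : ℕ :=
  sSup {k | ∃ M : Set (Sym2 V), M ⊆ G.edgeSet ∧ (∀ e ∈ M, ∀ v ∈ e, v ∈ S) ∧
    (∀ e ∈ M, ∀ f ∈ M, e ≠ f → ∀ v, v ∈ e → v ∉ f) ∧ M.ncard = k}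

/-- Labels used in the family `F`: `A`, or `B k` where `k` records the number of
vertices of each vine of the labeled generalized star that produced the label. -/
inductive Lab | A | B (k : ℕ)

/-- A labeled generalized star with center `c` whose vines have `k` vertices each
(equivalently, every leaf is at distance `k` from `c`); the degenerate case
`deg c = 2` is the convention regarding a path of length `2k` as a labeled
generalized star with two vines.  The neighbors of the center are labeled `B k`,
the other non-leaf vertices (and the center) are labeled `A`, leaves are unlabeled. -/
def IsLGenStar {W : Type*} (H : SimpleGraph W) (c : W) (k : ℕ)
    (lab : W → Option Lab) : Prop :=
  H.IsTree ∧ 2 ≤ ndeg H c ∧ (∀ v, v ≠ c → ndeg H v ≤ 2) ∧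
  (∀ v, ndeg H v = 1 → H.dist c v = k) ∧
  lab c = some Lab.A ∧
  (∀ v, H.Adj c v → lab v = some (Lab.B k)) ∧
  (∀ v, v ≠ c → ¬H.Adj c v → ndeg H v = 1 → lab v = none) ∧
  (∀ v, v ≠ c → ¬H.Adj c v → 2 ≤ ndeg H v → lab v = some Lab.A)

/-- A labeled path: a path with at least three vertices, non-leaf vertices labeled `A`. -/
def IsLPath {W : Type*} (H : SimpleGraph W) (lab : W → Option Lab) : Prop :=
  H.IsTree ∧ (∀ v, ndeg H v ≤ 2) ∧ 3 ≤ Nat.card W ∧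
  (∀ v, ndeg H v = 1 → lab v = none) ∧
  ∀ v, 2 ≤ ndeg H v → lab v = some Lab.A

/-- The induced subgraph of `T` on `s` is a labeled generalized star. -/
def LGenStarOn (T : SimpleGraph V) (s : Set V) (c : V) (k : ℕ)
    (lab : V → Option Lab) : Prop :=
  ∃ hc : c ∈ s, IsLGenStar (T.induce s) ⟨c, hc⟩ k fun v => lab v.1

/-- The induced subgraph of `T` on `s` is a labeled path. -/
def LPathOn (T : SimpleGraph V) (s : Set V) (lab : V → Option Lab) : Prop :=
  IsLPath (T.induce s) fun v => lab v.1

/-- The family `F` of labeled trees, realized as induced subgraphs (on vertex sets `s`)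
of an ambient graph `T`:  start from a labeled generalized star with at least three
vines or from a labeled path, and repeatedly attach, via a single new edge, a labeled
generalized star with at least three vines at a vertex labeled `A` (Type-1), a labeled
path by one of its non-leaf vertices at a vertex labeled `A` (Type-2), or a labeled
generalized star whose vines have the same number of vertices `k` as those of the star
that labeled `u` with `B k`, at a vertex `u` labeled `B k` (Type-3). -/
inductive InF (T : SimpleGraph V) : Set V → (V → Option Lab) → Prop
  | base_star (s : Set V) (c : V) (k : ℕ) (lab : V → Option Lab) :
      LGenStarOn T s c k lab → 3 ≤ {w ∈ s | T.Adj c w}.ncard → InF T s lab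
  | base_path (s : Set V) (lab : V → Option Lab) :
      LPathOn T s lab → InF T s lab
  | type1 (s : Set V) (lab : V → Option Lab) (t : Set V) (lab' : V → Option Lab)
      (u c : V) (k : ℕ) :
      InF T s lab → Disjoint s t → u ∈ s → c ∈ t → lab u = some Lab.A →
      LGenStarOn T t c k lab' → 3 ≤ {w ∈ t | T.Adj c w}.ncard →
      (∀ x ∈ s, ∀ y ∈ t, (T.Adj x y ↔ x = u ∧ y = c)) →
      (∀ x ∈ s, lab' x = lab x) →
      InF T (s ∪ t) lab'
  | type2 (s : Set V) (lab : V → Option Lab) (t : Set V) (lab' : V → Option Lab)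
      (u v : V) :
      InF T s lab → Disjoint s t → u ∈ s → v ∈ t → lab u = some Lab.A →
      LPathOn T t lab' → 2 ≤ {w ∈ t | T.Adj v w}.ncard →
      (∀ x ∈ s, ∀ y ∈ t, (T.Adj x y ↔ x = u ∧ y = v)) →
      (∀ x ∈ s, lab' x = lab x) →
      InF T (s ∪ t) lab'
  | type3 (s : Set V) (lab : V → Option Lab) (t : Set V) (lab' : V → Option Lab)
      (u c : V) (k : ℕ) :
      InF T s lab → Disjoint s t → u ∈ s → c ∈ t → lab u = some (Lab.B k) →
      LGenStarOn T t c k lab' →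
      (∀ x ∈ s, ∀ y ∈ t, (T.Adj x y ↔ x = u ∧ y = c)) →
      (∀ x ∈ s, lab' x = lab x) →
      InF T (s ∪ t) lab'

/-- `G` is obtained from the tree `T` by expanding each edge of `T` into a complete
graph of arbitrary order: there is an embedding `ι` of the vertices of `T` and an
assignment `b` of a block of vertices of `G` to each edge of `T` such that an original
vertex lies in the block of an edge iff it is an endpoint of that edge, blocks of
distinct edges meet only in original vertices, every vertex of `G` lies in some block,
and two distinct vertices of `G` are adjacent iff they lie in a common block. -/
def IsBlockExpansion {U W : Type*} (T : SimpleGraph U) (G : SimpleGraph W) : Prop :=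
  ∃ (ι : U ↪ W) (b : Sym2 U → Set W),
    (∀ (u : U), ∀ e ∈ T.edgeSet, (ι u ∈ b e ↔ u ∈ e)) ∧
    (∀ e ∈ T.edgeSet, ∀ f ∈ T.edgeSet, e ≠ f → b e ∩ b f ⊆ Set.range ι) ∧
    (∀ w : W, ∃ e ∈ T.edgeSet, w ∈ b e) ∧
    (∀ x y : W, G.Adj x y ↔ x ≠ y ∧ ∃ e ∈ T.edgeSet, x ∈ b e ∧ y ∈ b e)

/-!
If `card V ≤ k + 1`, then an L(2,1)-labeling with labels in `{0, …, k}` can be made injective. Take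
one with the fewest unused labels and suppose that two vertices share a label. Neither of them can
be moved to an unused label `h`, not even after the labels have been rearranged so that no new
consecutive labels meet an edge. This forces both `h - 1` and `h + 1` to be repeated, for every
unused `h`, and then there are too few vertices.

An injective labeling is an L(2,1)-labeling of `G` exactly when vertices with consecutive labels are
adjacent in `Gᶜ`. The maximal runs of consecutive labels then cover `Gᶜ` by paths, and conversely
the paths of a covering can be labeled one after the other with one skipped label between them.
Hence `λ(G) = card V + P(Gᶜ) - 2`, while a λ-labeling has at least `λ(G) + 1 - card V` holes, with
equality for injective ones.
-/

section L21Labeling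

variable {G : SimpleGraph V} {f : V → ℕ}

lemma isL21Labeling_iff : IsL21Labeling G f ↔
    (∀ u v, G.Adj u v → f u + 2 ≤ f v ∨ f v + 2 ≤ f u) ∧
      ∀ u v w, u ≠ v → G.Adj u w → G.Adj v w → f u ≠ f v := by
  have dist_add_two : ∀ a b, 2 ≤ Nat.dist a b ↔ a + 2 ≤ b ∨ b + 2 ≤ a := by
    unfold Nat.dist; omega
  have one_le_dist : ∀ a b, 1 ≤ Nat.dist a b ↔ a ≠ b := by
    unfold Nat.dist; omega
  simp only [IsL21Labeling, dist_add_two, one_le_dist]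
  refine and_congr_right fun hadj =>
    ⟨fun hdist u v w huv hu hv hfuv => ?_, fun hcommon u v h => ?_⟩
  · refine hdist u v (le_antisymm (dist_le (.cons hu (.cons hv.symm .nil))) ?_) hfuv
    have hpos : 0 < G.dist u v := (hu.reachable.trans hv.symm.reachable).pos_dist_of_ne huv
    have hne : G.dist u v ≠ 1 := fun h => by have := hadj u v (dist_eq_one_iff_adj.mp h); omega
    omega
  · obtain ⟨p, hp⟩ := exists_walk_of_dist_ne_zero (G := G) (u := u) (v := v) (by omega)
    have huv : u ≠ v := fun huv => by simp [huv] at h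
    match p, hp.trans h with
    | .cons (v := w) hu (.cons hv .nil), _ => exact hcommon u v w huv hu hv.symm

lemma IsL21Labeling.add_two_le (hf : IsL21Labeling G f) {u v : V} (huv : G.Adj u v) :
    f u + 2 ≤ f v ∨ f v + 2 ≤ f u :=
  (isL21Labeling_iff.mp hf).1 u v huv

lemma IsL21Labeling.ne_of_common_neighbor (hf : IsL21Labeling G f) {u v w : V} (huv : u ≠ v)
    (hu : G.Adj u w) (hv : G.Adj v w) : f u ≠ f v :=
  (isL21Labeling_iff.mp hf).2 u v w huv hu hv

lemma IsL21Labeling.comp {σ : ℕ → ℕ} (hf : IsL21Labeling G f) (hσ : σ.Injective)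
    (hadj : ∀ u v, G.Adj u v → σ (f u) + 2 ≤ σ (f v) ∨ σ (f v) + 2 ≤ σ (f u)) :
    IsL21Labeling G (σ ∘ f) :=
  isL21Labeling_iff.mpr
    ⟨hadj, fun _ _ _ huv hu hv h => hf.ne_of_common_neighbor huv hu hv (hσ h)⟩

lemma isL21Labeling_of_injective (hf : f.Injective)
    (hadj : ∀ u v, f u + 1 = f v → ¬G.Adj u v) : IsL21Labeling G f := by
  refine isL21Labeling_iff.mpr ⟨fun u v huv => ?_, fun u v w huv _ _ h => huv (hf h)⟩
  have hne : f u ≠ f v := fun h => huv.ne (hf h)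
  have huv' : f u + 1 ≠ f v := fun h => hadj u v h huv
  have hvu' : f v + 1 ≠ f u := fun h => hadj v u h huv.symm
  omega

lemma isL21Labeling_update [DecidableEq V] {u : V} {h : ℕ} (hh : ∀ v, f v ≠ h)
    (hadj : ∀ v w, v ≠ u → w ≠ u → G.Adj v w → f v + 2 ≤ f w ∨ f w + 2 ≤ f v)
    (hcommon : ∀ v w x, v ≠ w → G.Adj v x → G.Adj w x → f v ≠ f w)
    (hu : ∀ w, G.Adj u w → h + 2 ≤ f w ∨ f w + 2 ≤ h) :
    IsL21Labeling G (Function.update f u h) := by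
  rw [isL21Labeling_iff]
  constructor
  · intro v w hvw
    rcases eq_or_ne v u with rfl | hv
    · simpa [hvw.ne'] using hu w hvw
    rcases eq_or_ne w u with rfl | hw
    · simpa [hv] using (hu v hvw.symm).symm
    · simpa [hv, hw] using hadj v w hv hw hvw
  · intro v w x hvw hv hw
    rcases eq_or_ne v u with rfl | hvu
    · simpa [hvw.symm] using (hh w).symm
    rcases eq_or_ne w u with rfl | hwu
    · simpa [hvu] using hh v
    · simpa [hvu, hwu] using hcommon v w x hvw hv hw

end L21Labeling

section Labels

variable [Fintype V]

/-- The labels in `{0, …, k}` not taken by `f`. For a λ-labeling with span `k` these are the holes,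
because `0` and `k` are then both used. -/
def unusedLabels (k : ℕ) (f : V → ℕ) : Finset ℕ := Finset.range (k + 1) \ Finset.univ.image f

/-- The vertices labeled `i`. -/
def labelClass (f : V → ℕ) (i : ℕ) : Finset V := {v | f v = i}

variable {f : V → ℕ} {k : ℕ}

@[simp]
lemma mem_unusedLabels {h : ℕ} : h ∈ unusedLabels k f ↔ h ≤ k ∧ ∀ v, f v ≠ h := by
  simp [unusedLabels]

@[simp]
lemma mem_labelClass {i : ℕ} {v : V} : v ∈ labelClass f i ↔ f v = i := by
  simp [labelClass]

lemma card_unusedLabels_add_card_image (hf : ∀ v, f v ≤ k) :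
    (unusedLabels k f).card + (Finset.univ.image f).card = k + 1 := by
  have hsub : Finset.univ.image f ⊆ Finset.range (k + 1) := by
    simpa [Finset.image_subset_iff, Nat.lt_succ_iff] using hf
  simpa [unusedLabels] using Finset.card_sdiff_add_card_eq_card hsub

lemma two_le_card_labelClass_of_ne {i : ℕ} {u v : V} (huv : u ≠ v) (hu : f u = i) (hv : f v = i) :
    2 ≤ (labelClass f i).card :=
  Finset.one_lt_card.mpr ⟨u, mem_labelClass.mpr hu, v, mem_labelClass.mpr hv, huv⟩

lemma card_image_add_card_le {T : Finset ℕ} (hT : ∀ i ∈ T, 2 ≤ (labelClass f i).card) :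
    (Finset.univ.image f).card + T.card ≤ Fintype.card V := by
  have hTsub : T ⊆ Finset.univ.image f := fun i hi => by
    obtain ⟨v, hv⟩ := Finset.card_pos.mp (zero_lt_two.trans_le (hT i hi))
    exact Finset.mem_image.mpr ⟨v, Finset.mem_univ v, mem_labelClass.mp hv⟩
  calc (Finset.univ.image f).card + T.card
      = ∑ i ∈ Finset.univ.image f, (1 + if i ∈ T then 1 else 0) := by
        rw [Finset.sum_add_distrib, Finset.sum_ite_mem, Finset.inter_eq_right.mpr hTsub]
        simp
    _ ≤ ∑ i ∈ Finset.univ.image f, (labelClass f i).card := by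
        refine Finset.sum_le_sum fun i hi => ?_
        obtain ⟨v, -, hv⟩ := Finset.mem_image.mp hi
        split_ifs with hiT
        · exact hT i hiT
        · exact Finset.card_pos.mpr ⟨v, mem_labelClass.mpr hv⟩
    _ = Fintype.card V :=
        (Finset.card_eq_sum_card_image f Finset.univ).symm

end Labels

section CutReverse

/-- The permutation of `ℕ` which lists `0, …, h - 1` in the order `h - 1, …, c, 0, …, c - 1`, meant
for `c ≤ h`. It breaks the interval between `c - 1` and `c`, puts `c` next to `0`, and moves `c - 1`
to the position next to `h`. For `c = 0` it is the reversal of `0, …, h - 1`. -/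
def cutReverse (c h i : ℕ) : ℕ :=
  if i < c then i + (h - c) else if i < h then h - 1 - i else i

variable {c h : ℕ}

lemma cutReverse_injective (hc : c ≤ h) : (cutReverse c h).Injective := by
  intro i j hij
  unfold cutReverse at hij
  split_ifs at hij <;> omega

lemma cutReverse_le {k i : ℕ} (hh : h ≤ k + 1) (hi : i ≤ k) : cutReverse c h i ≤ k := by
  unfold cutReverse
  split_ifs <;> omega

lemma cutReverse_self (hc : c ≤ h) : cutReverse c h h = h := by
  simp [cutReverse, hc.not_gt]

lemma cutReverse_zero_of_lt {i : ℕ} (hi : i < h) : cutReverse 0 h i = h - 1 - i := by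
  simp [cutReverse, hi]

lemma cutReverse_zero_eq_pred_iff {i : ℕ} (hh : 0 < h) : cutReverse 0 h i = h - 1 ↔ i = 0 := by
  unfold cutReverse
  split_ifs <;> omega

lemma cutReverse_zero_eq_succ_iff {i : ℕ} : cutReverse 0 h i = h + 1 ↔ i = h + 1 := by
  unfold cutReverse
  split_ifs <;> omega

lemma IsL21Labeling.reverse {G : SimpleGraph V} {f : V → ℕ} (hf : IsL21Labeling G f)
    (hh : ∀ v, f v ≠ h) : IsL21Labeling G (cutReverse 0 h ∘ f) := by
  refine hf.comp (cutReverse_injective h.zero_le) fun u v huv => ?_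
  have := hf.add_two_le huv
  have := hh u
  have := hh v
  unfold cutReverse
  split_ifs <;> omega

lemma IsL21Labeling.update_cutReverse [DecidableEq V] {G : SimpleGraph V} {f : V → ℕ} {u : V}
    (hf : IsL21Labeling G f) (hh : ∀ v, f v ≠ h) (hu : f u < h)
    (hsucc : ∀ z, f z = h + 1 → ¬G.Adj u z)
    (hzero : ∀ w z, w ≠ u → f w = f u → f z = 0 → ¬G.Adj w z) :
    IsL21Labeling G (Function.update (cutReverse (f u) h ∘ f) u h) := by
  have hinj := cutReverse_injective hu.le
  refine isL21Labeling_update (fun v hv => hh v (hinj (hv.trans (cutReverse_self hu.le).symm)))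
    (fun v w hvu hwu hvw => ?_)
    (fun v w x hvw hv hw h => hf.ne_of_common_neighbor hvw hv hw (hinj h)) fun w huw => ?_
  · have := hf.add_two_le hvw
    have := hh v
    have := hh w
    have hvw₀ : f v = f u → f w ≠ 0 := fun h h₀ => hzero v w hvu h h₀ hvw
    have hwv₀ : f w = f u → f v ≠ 0 := fun h h₀ => hzero w v hwu h h₀ hvw.symm
    simp only [Function.comp_apply, cutReverse]
    split_ifs <;> omega
  · have := hf.add_two_le huw
    have := hh w
    have hw : f w ≠ h + 1 := fun h => hsucc w h huw
    simp only [Function.comp_apply, cutReverse]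
    split_ifs <;> omega

end CutReverse

section LabelMaximal

variable [Fintype V]

/-- `f` is an L(2,1)-labeling with labels in `{0, …, k}` which uses as many different labels as
possible, that is, leaves as few of the labels in `{0, …, k}` unused as possible. -/
structure IsLabelMaximal (G : SimpleGraph V) (k : ℕ) (f : V → ℕ) : Prop where
  isL21Labeling : IsL21Labeling G f
  le : ∀ v, f v ≤ k
  card_image_le : ∀ g, IsL21Labeling G g → (∀ v, g v ≤ k) →
    (Finset.univ.image g).card ≤ (Finset.univ.image f).card

variable {G : SimpleGraph V} {k h : ℕ} {f : V → ℕ} {u v : V}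

lemma IsL21Labeling.exists_isLabelMaximal (hf : IsL21Labeling G f) (hk : ∀ v, f v ≤ k) :
    ∃ g, IsLabelMaximal G k g := by
  have hfin : {g | IsL21Labeling G g ∧ ∀ v, g v ≤ k}.Finite :=
    (Set.Finite.pi' fun _ => Set.finite_Iic k).subset fun g hg => hg.2
  obtain ⟨g, ⟨hg, hgk⟩, hmax⟩ :=
    hfin.exists_maximalFor (fun g => (Finset.univ.image g).card) _ ⟨f, hf, hk⟩
  exact ⟨g, hg, hgk, fun g' hg' hgk' => (le_total _ _).elim (hmax ⟨hg', hgk'⟩) id⟩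

namespace IsLabelMaximal

lemma reverse (hf : IsLabelMaximal G k f) (hh : ∀ v, f v ≠ h) (hhk : h ≤ k + 1) :
    IsLabelMaximal G k (cutReverse 0 h ∘ f) where
  isL21Labeling := hf.isL21Labeling.reverse hh
  le v := cutReverse_le hhk (hf.le v)
  card_image_le g hg hgk := by
    rw [← Finset.image_image, Finset.card_image_of_injective _ (cutReverse_injective h.zero_le)]
    exact hf.card_image_le g hg hgk

/-- Moving one of two vertices with a common label to an unused label would use one more label. -/
lemma not_isL21Labeling_update [DecidableEq V] {σ : ℕ → ℕ} (hf : IsLabelMaximal G k f)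
    (hσ : σ.Injective) (hσk : ∀ i ≤ k, σ i ≤ k) (hσh : σ h = h) (hhk : h ≤ k)
    (hh : ∀ w, f w ≠ h) (huv : u ≠ v) (hfuv : f u = f v) :
    ¬IsL21Labeling G (Function.update (σ ∘ f) u h) := by
  intro hg
  have hle := hf.card_image_le _ hg fun w => by
    rcases eq_or_ne w u with rfl | hw
    · simpa using hhk
    · simpa [hw] using hσk _ (hf.le w)
  have hnotMem : h ∉ (Finset.univ.image f).image σ := by
    simp only [Finset.mem_image, Finset.mem_univ, true_and, exists_exists_eq_and, not_exists]
    exact fun w hw => hh w (hσ (hw.trans hσh.symm))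
  have hsub : insert h ((Finset.univ.image f).image σ) ⊆
      Finset.univ.image (Function.update (σ ∘ f) u h) := by
    rw [Finset.image_image, Finset.insert_subset_iff, Finset.image_subset_iff]
    simp only [Finset.mem_image, Finset.mem_univ, true_and, forall_const]
    refine ⟨⟨u, by simp⟩, fun w => ?_⟩
    rcases eq_or_ne w u with rfl | hw
    · exact ⟨v, by simp [huv.symm, hfuv]⟩
    · exact ⟨w, by simp [hw]⟩
  have hlt := (Finset.card_le_card hsub).trans hle
  rw [Finset.card_insert_of_notMem hnotMem, Finset.card_image_of_injective _ hσ] at hlt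
  omega

lemma exists_adj_of_mem_unusedLabels (hf : IsLabelMaximal G k f) (hh : h ∈ unusedLabels k f)
    (huv : u ≠ v) (hfuv : f u = f v) : ∃ z, G.Adj u z ∧ (f z = h - 1 ∨ f z = h + 1) := by
  classical
  obtain ⟨hhk, hh⟩ := mem_unusedLabels.mp hh
  by_contra! hno
  refine hf.not_isL21Labeling_update (σ := id) Function.injective_id (fun _ => id) rfl hhk hh
    huv hfuv ?_
  refine isL21Labeling_update hh (fun v w _ _ => hf.isL21Labeling.add_two_le)
    (fun v w x => hf.isL21Labeling.ne_of_common_neighbor) fun w huw => ?_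
  have := hno w huw
  have := hh w
  simp only [Function.comp_apply, id_eq]
  omega

/-- Each vertex in the first class has a neighbor in the second one, and these neighbors are
distinct because equally labeled vertices have no common neighbor. -/
lemma card_labelClass_le_of_two_le {i j : ℕ} (hf : IsLabelMaximal G k f)
    (hh : h ∈ unusedLabels k f) (hij : i = h - 1 ∧ j = h + 1 ∨ i = h + 1 ∧ j = h - 1)
    (hi : 2 ≤ (labelClass f i).card) : (labelClass f i).card ≤ (labelClass f j).card := by
  have hex : ∀ u, f u = i → ∃ z, G.Adj u z ∧ f z = j := fun u hu => by
    obtain ⟨v, hv, hvu⟩ := Finset.exists_mem_ne (show 1 < (labelClass f i).card from hi) u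
    obtain ⟨z, huz, hz⟩ := hf.exists_adj_of_mem_unusedLabels hh hvu.symm
      (hu.trans (mem_labelClass.mp hv).symm)
    have := hf.isL21Labeling.add_two_le huz
    exact ⟨z, huz, by omega⟩
  choose! m hadj hm using hex
  refine Finset.card_le_card_of_injOn m (fun u hu => by simp_all) fun u hu v hv huv => ?_
  simp only [Finset.mem_coe, mem_labelClass] at hu hv
  by_contra hne
  exact hf.isL21Labeling.ne_of_common_neighbor hne (hadj u hu) (huv ▸ hadj v hv) (hu.trans hv.symm)

lemma exists_two_adj_of_mem_unusedLabels (hf : IsLabelMaximal G k f) (hh : h ∈ unusedLabels k f)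
    (huv : u ≠ v) (hfuv : f u = f v) : ∃ z y, z ≠ y ∧ G.Adj u z ∧ G.Adj v y ∧
      (f z = h - 1 ∨ f z = h + 1) ∧ (f y = h - 1 ∨ f y = h + 1) := by
  obtain ⟨z, huz, hz⟩ := hf.exists_adj_of_mem_unusedLabels hh huv hfuv
  obtain ⟨y, hvy, hy⟩ := hf.exists_adj_of_mem_unusedLabels hh huv.symm hfuv.symm
  refine ⟨z, y, ?_, huz, hvy, hz, hy⟩
  rintro rfl
  exact hf.isL21Labeling.ne_of_common_neighbor huv huz hvy hfuv

lemma card_labelClass_pred_eq_card_labelClass_succ (hf : IsLabelMaximal G k f)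
    (hh : h ∈ unusedLabels k f) (huv : u ≠ v) (hfuv : f u = f v) :
    (labelClass f (h - 1)).card = (labelClass f (h + 1)).card ∧
      0 < (labelClass f (h + 1)).card := by
  have hpred := hf.card_labelClass_le_of_two_le hh (.inl ⟨rfl, rfl⟩)
  have hsucc := hf.card_labelClass_le_of_two_le hh (.inr ⟨rfl, rfl⟩)
  obtain ⟨z, y, hzy, -, -, hz, hy⟩ := hf.exists_two_adj_of_mem_unusedLabels hh huv hfuv
  have hpos : ∀ w i, f w = i → 0 < (labelClass f i).card := fun w i hw =>
    Finset.card_pos.mpr ⟨w, mem_labelClass.mpr hw⟩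
  rcases hz with hz | hz <;> rcases hy with hy | hy
  · have := two_le_card_labelClass_of_ne hzy hz hy
    omega
  · have := hpos z _ hz
    have := hpos y _ hy
    omega
  · have := hpos z _ hz
    have := hpos y _ hy
    omega
  · have := two_le_card_labelClass_of_ne hzy hz hy
    omega

/-- If the classes of `0` and `h + 1` were singletons, then `u` would have no neighbor labeled
`h + 1` and would be the only vertex with its label having a neighbor labeled `0`; so cutting the
labels below `h` at `f u` and moving `u` to `h` would give another L(2,1)-labeling. -/
lemma two_le_card_labelClass_zero_or_succ (hf : IsLabelMaximal G k f)
    (hh : h ∈ unusedLabels k f) (huv : u ≠ v) (hfuv : f u = f v) (huh : f u < h) {z y : V}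
    (huz : G.Adj u z) (hz : f z = 0) (hvy : G.Adj v y) (hy : f y = h + 1) :
    2 ≤ (labelClass f 0).card ∨ 2 ≤ (labelClass f (h + 1)).card := by
  classical
  obtain ⟨hhk, hunused⟩ := mem_unusedLabels.mp hh
  by_contra! hcard
  have eq_z : ∀ x, f x = 0 → x = z := fun x hx => by
    by_contra hxz
    exact hcard.1.not_ge (two_le_card_labelClass_of_ne hxz hx hz)
  have eq_y : ∀ x, f x = h + 1 → x = y := fun x hx => by
    by_contra hxy
    exact hcard.2.not_ge (two_le_card_labelClass_of_ne hxy hx hy)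
  refine hf.not_isL21Labeling_update (cutReverse_injective huh.le)
    (fun i => cutReverse_le (hhk.trans k.le_succ)) (cutReverse_self huh.le) hhk hunused huv hfuv
    (hf.isL21Labeling.update_cutReverse hunused huh (fun x hx hux => ?_)
      fun w x hwu hw hx hwx => ?_)
  · rw [eq_y x hx] at hux
    exact hf.isL21Labeling.ne_of_common_neighbor huv hux hvy hfuv
  · rw [eq_z x hx] at hwx
    exact hf.isL21Labeling.ne_of_common_neighbor hwu hwx huz hw

/-- Reversing the labels below `h` turns the class of `0` into the class of `h - 1`. -/
lemma two_le_card_labelClass_succ_of_lt (hf : IsLabelMaximal G k f) (hh : h ∈ unusedLabels k f)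
    (huv : u ≠ v) (hfuv : f u = f v) (huh : f u < h) : 2 ≤ (labelClass f (h + 1)).card := by
  obtain ⟨hhk, hunused⟩ := mem_unusedLabels.mp hh
  let g := cutReverse 0 h ∘ f
  have hg : IsLabelMaximal G k g := hf.reverse hunused (hhk.trans k.le_succ)
  have hfuvg : g u = g v := congrArg (cutReverse 0 h) hfuv
  have hhg : h ∈ unusedLabels k g := mem_unusedLabels.mpr ⟨hhk, fun x hx =>
    hunused x (cutReverse_injective h.zero_le (hx.trans (cutReverse_self h.zero_le).symm))⟩
  have hzero : ∀ x, g x = h - 1 ↔ f x = 0 := fun x => cutReverse_zero_eq_pred_iff (by omega)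
  have hsucc : ∀ x, g x = h + 1 ↔ f x = h + 1 := fun x => cutReverse_zero_eq_succ_iff
  have hcard : (labelClass f 0).card = (labelClass f (h + 1)).card := by
    simpa only [labelClass, hzero, hsucc] using
      (hg.card_labelClass_pred_eq_card_labelClass_succ hhg huv hfuvg).1
  obtain ⟨z, y, hzy, huz, hvy, hz, hy⟩ := hg.exists_two_adj_of_mem_unusedLabels hhg huv hfuvg
  rw [hzero, hsucc] at hz hy
  rcases hz with hz | hz <;> rcases hy with hy | hy
  · exact hcard ▸ two_le_card_labelClass_of_ne hzy hz hy
  · have := hf.two_le_card_labelClass_zero_or_succ hh huv hfuv huh huz hz hvy hy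
    omega
  · have := hf.two_le_card_labelClass_zero_or_succ hh huv.symm hfuv.symm (hfuv ▸ huh)
      hvy hy huz hz
    omega
  · exact two_le_card_labelClass_of_ne hzy hz hy

lemma two_le_card_labelClass_of_mem_unusedLabels (hf : IsLabelMaximal G k f)
    (hh : h ∈ unusedLabels k f) (huv : u ≠ v) (hfuv : f u = f v) :
    2 ≤ (labelClass f (h - 1)).card ∧ 2 ≤ (labelClass f (h + 1)).card := by
  have hcard := (hf.card_labelClass_pred_eq_card_labelClass_succ hh huv hfuv).1
  obtain ⟨hhk, hunused⟩ := mem_unusedLabels.mp hh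
  rcases lt_or_gt_of_ne (hunused u) with huh | huh
  · have := hf.two_le_card_labelClass_succ_of_lt hh huv hfuv huh
    omega
  · have hrev : ∀ x, cutReverse 0 (k + 1) (f x) = k - f x := fun x =>
      cutReverse_zero_of_lt (Nat.lt_succ_of_le (hf.le x))
    have hg : IsLabelMaximal G k (cutReverse 0 (k + 1) ∘ f) :=
      hf.reverse (fun x => (Nat.lt_succ_of_le (hf.le x)).ne) le_rfl
    have hclass : labelClass (cutReverse 0 (k + 1) ∘ f) (k - h + 1) = labelClass f (h - 1) := by
      ext x
      simp only [mem_labelClass, Function.comp_apply, hrev]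
      have := hunused x
      have := hf.le x
      have := hf.le u
      omega
    have htwo : 2 ≤ (labelClass f (h - 1)).card := hclass ▸
      hg.two_le_card_labelClass_succ_of_lt (h := k - h) (u := u) (v := v)
        (mem_unusedLabels.mpr ⟨k.sub_le h, fun x => by
          have := hf.le x
          have := hunused x
          simp only [Function.comp_apply, hrev]
          omega⟩)
        huv (congrArg (cutReverse 0 (k + 1)) hfuv) (by
          have := hf.le u
          simp only [Function.comp_apply, hrev]
          omega)
    exact ⟨htwo, hcard ▸ htwo⟩

lemma injective (hf : IsLabelMaximal G k f) (hcard : Fintype.card V ≤ k + 1) : f.Injective := by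
  intro u v hfuv
  by_contra huv
  have hunused := card_unusedLabels_add_card_image hf.le
  have hlt : (Finset.univ.image f).card < Fintype.card V :=
    lt_of_le_of_ne Finset.card_image_le fun h =>
      huv (Finset.card_image_iff.mp h (Finset.mem_univ u) (Finset.mem_univ v) hfuv)
  have hne : (unusedLabels k f).Nonempty := Finset.card_pos.mp (by omega)
  let m := (unusedLabels k f).min' hne
  have hm : m ∈ unusedLabels k f := Finset.min'_mem _ hne
  let T := insert (m - 1) ((unusedLabels k f).image (· + 1))
  have hT : T.card = (unusedLabels k f).card + 1 := by
    rw [Finset.card_insert_of_notMem, Finset.card_image_of_injective _ (add_left_injective 1)]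
    rw [Finset.mem_image]
    rintro ⟨h, hh, hhm⟩
    have : m ≤ h := Finset.min'_le _ _ hh
    omega
  have htwo : ∀ i ∈ T, 2 ≤ (labelClass f i).card := by
    simp only [T, Finset.forall_mem_insert, Finset.forall_mem_image]
    exact ⟨(hf.two_le_card_labelClass_of_mem_unusedLabels hm huv hfuv).1,
      fun h hh => (hf.two_le_card_labelClass_of_mem_unusedLabels hh huv hfuv).2⟩
  have := card_image_add_card_le htwo
  omega

end IsLabelMaximal

lemma IsL21Labeling.exists_injective (hf : IsL21Labeling G f) (hk : ∀ v, f v ≤ k)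
    (hcard : Fintype.card V ≤ k + 1) :
    ∃ g : V → ℕ, IsL21Labeling G g ∧ (∀ v, g v ≤ k) ∧ g.Injective := by
  obtain ⟨g, hg⟩ := hf.exists_isLabelMaximal hk
  exact ⟨g, hg.isL21Labeling, hg.le, hg.injective hcard⟩

end LabelMaximal

section LinearForest

variable {H : SimpleGraph V}

lemma exists_adj_dist_add_one_eq {r v : V} (hv : H.dist r v ≠ 0) :
    ∃ u, H.Adj u v ∧ H.dist r u + 1 = H.dist r v := by
  obtain ⟨p, hp⟩ := exists_walk_of_dist_ne_zero hv
  have hnil : ¬p.Nil := fun h => hv (hp ▸ Walk.length_eq_zero_iff.mpr h)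
  refine ⟨p.penultimate, p.adj_penultimate hnil, le_antisymm ?_ ?_⟩
  · rw [← hp, ← p.length_dropLast_add_one hnil]
    exact Nat.succ_le_succ (dist_le p.dropLast)
  · calc H.dist r v ≤ H.dist r p.penultimate + H.dist p.penultimate v :=
          p.dropLast.reachable.dist_triangle_left v
      _ = H.dist r p.penultimate + 1 := by
          rw [dist_eq_one_iff_adj.mpr (p.adj_penultimate hnil)]

lemma eq_of_adj_of_dist_add_one_eq (hH : H.IsAcyclic) {r u v w : V} (hreach : H.Reachable r w)
    (hu : H.Adj u w) (hv : H.Adj v w) (hdu : H.dist r u + 1 = H.dist r w)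
    (hdv : H.dist r v + 1 = H.dist r w) : u = v := by
  have hpath : ∀ x, H.Adj x w → H.dist r x + 1 = H.dist r w →
      ∃ p : H.Path r w, p.1.penultimate = x := fun x hx hdx => by
    obtain ⟨p, hp⟩ := (hreach.trans hx.symm.reachable).exists_walk_length_eq_dist
    have hlen : (p.concat hx).length = H.dist r w := by rw [Walk.length_concat, hp, hdx]
    exact ⟨⟨p.concat hx, Walk.isPath_of_length_eq_dist _ hlen⟩, p.penultimate_concat hx⟩
  obtain ⟨p, rfl⟩ := hpath u hu hdu
  obtain ⟨q, rfl⟩ := hpath v hv hdv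
  rw [(hH.subsingleton_path r w).elim p q]

/-- A vertex at maximal distance from some fixed vertex of the component has degree at most one. -/
lemma exists_ndeg_le_one [Finite V] (hH : H.IsAcyclic) (C : H.ConnectedComponent) :
    ∃ r, H.connectedComponentMk r = C ∧ ndeg H r ≤ 1 := by
  obtain ⟨x, rfl⟩ := C.exists_rep
  obtain ⟨r, hr, hmax⟩ := (Set.toFinite {r | H.Reachable x r}).exists_maximalFor (H.dist x) _
    ⟨x, Reachable.refl x⟩
  have hdist : ∀ y, H.Adj r y → H.dist x y + 1 = H.dist x r := fun y hy => by
    have hle : H.dist x y ≤ H.dist x r :=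
      (le_total _ _).elim id (hmax (hr.trans hy.reachable))
    have := hH.dist_eq_dist_add_one_of_adj_of_reachable x hy hr
    omega
  refine ⟨r, ConnectedComponent.sound hr.symm,
    (Set.ncard_le_one (Set.toFinite _)).mpr fun y hy z hz => ?_⟩
  exact eq_of_adj_of_dist_add_one_eq hH hr hy.symm hz.symm (hdist y hy) (hdist z hz)

lemma eq_of_dist_eq_of_ndeg_le [Finite V] (hdeg : ∀ v, ndeg H v ≤ 2) {r : V}
    (hr : ndeg H r ≤ 1) {u v : V} (hu : H.Reachable r u) (hv : H.Reachable r v)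
    (huv : H.dist r u = H.dist r v) : u = v := by
  induction hd : H.dist r u generalizing u v with
  | zero =>
    rw [← hu.dist_eq_zero_iff.mp hd, ← hv.dist_eq_zero_iff.mp (huv ▸ hd)]
  | succ d ih =>
    obtain ⟨x, hxu, hx⟩ := exists_adj_dist_add_one_eq (hd ▸ d.succ_ne_zero : H.dist r u ≠ 0)
    obtain ⟨y, hyv, hy⟩ := exists_adj_dist_add_one_eq (huv ▸ hd ▸ d.succ_ne_zero : H.dist r v ≠ 0)
    obtain rfl : x = y := ih (hu.trans hxu.symm.reachable) (hv.trans hyv.symm.reachable)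
      (by omega) (by omega)
    by_contra hne
    rcases eq_or_ne (H.dist r x) 0 with h0 | h0
    · obtain rfl := (hu.trans hxu.symm.reachable).dist_eq_zero_iff.mp h0
      exact hne ((Set.ncard_le_one (Set.toFinite _)).mp hr u hxu v hyv)
    · obtain ⟨w, hwx, hw⟩ := exists_adj_dist_add_one_eq h0
      have hwu : w ≠ u := by rintro rfl; omega
      have hwv : w ≠ v := by rintro rfl; omega
      exact (hdeg x).not_gt ((Set.two_lt_ncard (Set.toFinite _)).mpr
        ⟨w, hwx.symm, u, hxu, v, hyv, hwu, hwv, hne⟩)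

/-- The position of a vertex is its distance from an end of its path. -/
lemma IsLinearForest.exists_position [Finite V] (hH : IsLinearForest H) :
    ∃ p : V → ℕ, (∀ u v, H.Reachable u v → p u = p v → u = v) ∧
      ∀ v, p v ≠ 0 → ∃ u, H.Adj u v ∧ p u + 1 = p v := by
  choose root hroot hdeg using exists_ndeg_le_one hH.1
  have hreach : ∀ v, H.Reachable (root (H.connectedComponentMk v)) v := fun v =>
    ConnectedComponent.exact (hroot _)
  refine ⟨fun v => H.dist (root (H.connectedComponentMk v)) v, fun u v huv h => ?_, fun v hv => ?_⟩
  · have hC := ConnectedComponent.sound huv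
    simp only [hC] at h
    exact eq_of_dist_eq_of_ndeg_le hH.2 (hdeg _) (hC ▸ hreach u) (hreach v) h
  · obtain ⟨u, huv, hu⟩ := exists_adj_dist_add_one_eq hv
    exact ⟨u, huv, by simpa only [ConnectedComponent.sound huv.reachable] using hu⟩

lemma exists_rank [Finite V] {α : Type*} [LinearOrder α] {key : V → α} (hkey : key.Injective) :
    ∃ rank : V → ℕ, (∀ u v, rank u < rank v ↔ key u < key v) ∧ ∀ v, rank v < Nat.card V := by
  let _ : LinearOrder V := LinearOrder.lift' key hkey
  have : Fintype V := Fintype.ofFinite V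
  let e : Fin (Nat.card V) ≃o V := Fintype.orderIsoFinOfCardEq V Nat.card_eq_fintype_card.symm
  exact ⟨fun v => e.symm v, fun u v => e.symm.lt_iff_lt, fun v => (e.symm v).is_lt⟩

/-- The paths are labeled one after the other, with one label skipped between any two of them. -/
lemma IsLinearForest.exists_injective_labeling [Finite V] (hH : IsLinearForest H) :
    ∃ f : V → ℕ, f.Injective ∧ (∀ u v, f u + 1 = f v → H.Adj u v) ∧
      ∀ v, f v + 2 ≤ Nat.card V + numPaths H := by
  obtain ⟨p, hp, hpred⟩ := hH.exists_position
  let e := Finite.equivFin H.ConnectedComponent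
  let idx : V → ℕ := fun v => e (H.connectedComponentMk v)
  have hidx : ∀ u v, idx u = idx v ↔ H.Reachable u v := fun u v => by
    rw [← ConnectedComponent.eq, ← e.injective.eq_iff, Fin.ext_iff]
  have hkey : (fun v => toLex (idx v, p v)).Injective := fun u v huv => by
    obtain ⟨hi, hpuv⟩ := Prod.mk.inj (toLex.injective huv)
    exact hp u v ((hidx u v).mp hi) hpuv
  obtain ⟨rank, hrank, hrank_lt⟩ := exists_rank hkey
  simp only [Prod.Lex.toLex_lt_toLex] at hrank
  have hinj : rank.Injective := fun u v huv => hkey (by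
    have huv' := (hrank u v).not.mp huv.not_lt
    have hvu' := (hrank v u).not.mp huv.not_gt
    simp only [toLex_inj, Prod.mk.injEq]
    omega)
  refine ⟨fun v => rank v + idx v, fun u v huv => hinj ?_, fun u v huv => ?_, fun v => ?_⟩
  · have := hrank u v
    have := hrank v u
    simp only at huv
    omega
  · simp only at huv
    obtain ⟨hi, hpuv, _⟩ : idx u = idx v ∧ p u < p v ∧ rank u + 1 = rank v := by
      have := hrank u v
      have := hrank v u
      omega
    obtain ⟨w, hwv, hw⟩ := hpred v (by omega)
    have hiw : idx w = idx v := (hidx w v).mpr hwv.reachable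
    suffices p u = p w from hp u w ((hidx u w).mp (hi.trans hiw.symm)) this ▸ hwv
    have := hrank u w
    have := hrank w v
    omega
  · have : idx v < numPaths H := (e _).is_lt
    have := hrank_lt v
    simp only
    omega

end LinearForest

section Consecutive

/-- Removing the edge between `a` and `b ⋗ a` separates `Iic a` from `Ici b`. -/
lemma isAcyclic_hasse {α : Type*} [LinearOrder α] : (hasse α).IsAcyclic := by
  have isBridge_of_covBy : ∀ a b : α, a ⋖ b → (hasse α).IsBridge s(a, b) := by
    intro a b hab
    rw [isBridge_iff]
    rintro ⟨p⟩
    have stays_below : ∀ x y, ((hasse α).deleteEdges {s(a, b)}).Walk x y → x ≤ a → y ≤ a := by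
      intro x y p
      induction p with
      | nil => exact id
      | @cons x z _ hxz _ ih =>
        refine fun hxa => ih ?_
        obtain ⟨hxz, hedge⟩ := deleteEdges_adj.mp hxz
        by_contra! haz
        rcases hasse_adj.mp hxz with hcov | hcov
        · obtain rfl : x = a := hxa.eq_of_not_lt fun hlt => hcov.2 hlt haz
          exact hedge (by rw [hab.unique_right hcov]; rfl)
        · exact (hcov.lt.trans_le hxa).not_gt haz
    exact (stays_below a b p le_rfl).not_gt hab.lt
  rw [isAcyclic_iff_forall_adj_isBridge]
  intro a b hab
  rcases hab with hab | hba
  · exact isBridge_of_covBy a b hab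
  · exact Sym2.eq_swap ▸ isBridge_of_covBy b a hba

/-- The graph in which two vertices are adjacent when their labels are consecutive integers. For an
injective L(2,1)-labeling of `G` it is a path covering of `Gᶜ`. -/
def consecutive (f : V → ℕ) : SimpleGraph V := (hasse ℕ).comap f

variable {f : V → ℕ}

@[simp]
lemma consecutive_adj {u v : V} :
    (consecutive f).Adj u v ↔ f u + 1 = f v ∨ f v + 1 = f u := by
  simp [consecutive, hasse_adj, Nat.covBy_iff_add_one_eq]

lemma consecutive_le_compl {G : SimpleGraph V} (hf : IsL21Labeling G f) : consecutive f ≤ Gᶜ := by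
  intro u v huv
  refine (compl_adj G u v).mpr ⟨huv.ne, fun h => ?_⟩
  have := hf.add_two_le h
  have := consecutive_adj.mp huv
  omega

lemma isLinearForest_consecutive (hf : f.Injective) : IsLinearForest (consecutive f) := by
  refine ⟨isAcyclic_hasse.of_comap ⟨f, hf⟩, fun v => ?_⟩
  have hsub : f '' (consecutive f).neighborSet v ⊆ {f v - 1, f v + 1} := by
    rintro _ ⟨w, hw, rfl⟩
    have := consecutive_adj.mp hw
    simp only [Set.mem_insert_iff, Set.mem_singleton_iff]
    omega
  calc ndeg (consecutive f) v = (f '' (consecutive f).neighborSet v).ncard :=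
        (Set.ncard_image_of_injective _ hf).symm
    _ ≤ ({f v - 1, f v + 1} : Set ℕ).ncard := Set.ncard_le_ncard hsub (Set.toFinite _)
    _ ≤ ({f v + 1} : Set ℕ).ncard + 1 := Set.ncard_insert_le _ _
    _ = 2 := by rw [Set.ncard_singleton]

lemma exists_reachable_consecutive (f : V → ℕ) (v : V) :
    ∃ s, (∀ w, f w + 1 ≠ f s) ∧ (consecutive f).Reachable s v := by
  induction hn : f v generalizing v with
  | zero => exact ⟨v, by simp [hn], Reachable.refl v⟩
  | succ n ih =>
    by_cases hv : ∃ w, f w + 1 = f v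
    · obtain ⟨w, hw⟩ := hv
      obtain ⟨s, hs, hsw⟩ := ih w (by omega)
      exact ⟨s, hs, hsw.trans (consecutive_adj.mpr (.inl hw)).reachable⟩
    · exact ⟨v, not_exists.mp hv, Reachable.refl v⟩

lemma numPaths_consecutive_le [Finite V] (f : V → ℕ) :
    numPaths (consecutive f) ≤ {s | ∀ w, f w + 1 ≠ f s}.ncard :=
  Nat.card_le_card_of_surjective
    (fun s : {s | ∀ w, f w + 1 ≠ f s} => (consecutive f).connectedComponentMk s) fun C => by
      obtain ⟨v, rfl⟩ := C.exists_rep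
      obtain ⟨s, hs, hsv⟩ := exists_reachable_consecutive f v
      exact ⟨⟨s, hs⟩, ConnectedComponent.sound hsv⟩

/-- The labels without predecessor are disjoint from the successors of labels. -/
lemma numPaths_consecutive_add_card_le [Finite V] {k : ℕ} (hf : f.Injective) (hk : ∀ v, f v ≤ k) :
    numPaths (consecutive f) + Nat.card V ≤ k + 2 := by
  have hsucc : Function.Injective fun v => f v + 1 := fun u v h => hf (Nat.succ_injective h)
  have hdisj : Disjoint (f '' {s | ∀ w, f w + 1 ≠ f s}) (Set.range fun v => f v + 1) := by
    rw [Set.disjoint_left]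
    rintro _ ⟨s, hs, rfl⟩ ⟨w, hw⟩
    exact hs w hw
  have hsub : f '' {s | ∀ w, f w + 1 ≠ f s} ∪ Set.range (fun v => f v + 1) ⊆ Set.Iio (k + 2) := by
    rintro _ (⟨v, -, rfl⟩ | ⟨v, rfl⟩) <;>
    · have := hk v
      simp only [Set.mem_Iio]
      omega
  calc numPaths (consecutive f) + Nat.card V
      ≤ {s | ∀ w, f w + 1 ≠ f s}.ncard + Nat.card V :=
        Nat.add_le_add_right (numPaths_consecutive_le f) _
    _ = (f '' {s | ∀ w, f w + 1 ≠ f s} ∪ Set.range fun v => f v + 1).ncard := by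
        rw [Set.ncard_union_eq hdisj, Set.ncard_image_of_injective _ hf, ← Set.image_univ,
          Set.ncard_image_of_injective _ hsucc, Set.ncard_univ]
    _ ≤ (Set.Iio (k + 2)).ncard := Set.ncard_le_ncard hsub
    _ = k + 2 := by simp

end Consecutive

section PathCover

variable {G : SimpleGraph V} {f : V → ℕ} {k : ℕ}

lemma pathCoverNumber_le {H : SimpleGraph V} (hle : H ≤ G) (hH : IsLinearForest H) :
    pathCoverNumber G ≤ numPaths H :=
  Nat.sInf_le ⟨H, hle, hH, rfl⟩

lemma exists_isMinPathCover (G : SimpleGraph V) : ∃ H, IsMinPathCover G H := by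
  have hbot : IsLinearForest (⊥ : SimpleGraph V) :=
    ⟨isAcyclic_bot, fun v => by simp [ndeg, neighborSet]⟩
  obtain ⟨H, hle, hH, hcard⟩ := Nat.sInf_mem
    (s := {k | ∃ H ≤ G, IsLinearForest H ∧ numPaths H = k}) ⟨_, ⊥, bot_le, hbot, rfl⟩
  exact ⟨H, hle, hH, hcard⟩

lemma IsL21Labeling.pathCoverNumber_compl_add_card_le [Finite V] (hf : IsL21Labeling G f)
    (hinj : f.Injective) (hk : ∀ v, f v ≤ k) : pathCoverNumber Gᶜ + Nat.card V ≤ k + 2 :=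
  (Nat.add_le_add_right
    (pathCoverNumber_le (consecutive_le_compl hf) (isLinearForest_consecutive hinj)) _).trans
    (numPaths_consecutive_add_card_le hinj hk)

end PathCover

section LambdaNum

variable {G : SimpleGraph V} {f : V → ℕ} {k : ℕ}

lemma lambdaNum_le (hf : IsL21Labeling G f) (hk : ∀ v, f v ≤ k) : lambdaNum G ≤ k :=
  Nat.sInf_le ⟨f, hf, hk⟩

lemma lambdaNum_add_two_le [Finite V] [Nonempty V] (G : SimpleGraph V) :
    lambdaNum G + 2 ≤ Nat.card V + pathCoverNumber Gᶜ := by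
  obtain ⟨H, hle, hH, hcard⟩ := exists_isMinPathCover Gᶜ
  obtain ⟨f, hf, hadj, hk⟩ := hH.exists_injective_labeling
  have hle := lambdaNum_le
    (isL21Labeling_of_injective hf fun u v h => ((compl_adj G u v).mp (hle (hadj u v h))).2)
    (fun v => Nat.le_sub_of_add_le (hk v))
  have := hk (Classical.arbitrary V)
  omega

lemma exists_isL21Labeling_le_lambdaNum [Finite V] (G : SimpleGraph V) :
    ∃ f, IsL21Labeling G f ∧ ∀ v, f v ≤ lambdaNum G := by
  have hf : IsL21Labeling G fun v => 2 * (Finite.equivFin V v : ℕ) :=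
    isL21Labeling_of_injective (fun u v h => by simpa [Fin.val_inj] using h)
      fun u v h => by omega
  exact Nat.sInf_mem (s := {k | ∃ f : V → ℕ, IsL21Labeling G f ∧ ∀ v, f v ≤ k})
    ⟨2 * Nat.card V, _, hf, fun v => Nat.mul_le_mul_left 2 (Finite.equivFin V v).is_lt.le⟩

variable [Nonempty V]

lemma IsL21Labeling.isLambdaLabeling (hf : IsL21Labeling G f) (hk : ∀ v, f v ≤ lambdaNum G) :
    IsLambdaLabeling G f := by
  refine ⟨hf, hk, ?_⟩
  by_contra! hne
  have hlt : ∀ v, f v < lambdaNum G := fun v => (hk v).lt_of_ne (hne v)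
  have := lambdaNum_le hf fun v => Nat.le_sub_one_of_lt (hlt v)
  have := hlt (Classical.arbitrary V)
  omega

lemma IsLambdaLabeling.exists_eq_zero (hf : IsLambdaLabeling G f) : ∃ v, f v = 0 := by
  by_contra! hne
  have hshift : IsL21Labeling G fun v => f v - 1 := by
    refine isL21Labeling_iff.mpr ⟨fun u v huv => ?_, fun u v w huv hu hv h => ?_⟩
    · have := hf.1.add_two_le huv
      have := hne u
      have := hne v
      omega
    · have := hf.1.ne_of_common_neighbor huv hu hv
      have := hne u
      have := hne v
      omega
  have := lambdaNum_le hshift fun v => Nat.sub_le_sub_right (hf.2.1 v) 1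
  have := hne (Classical.arbitrary V)
  have := hf.2.1 (Classical.arbitrary V)
  omega

variable [Fintype V]

lemma IsLambdaLabeling.labHoles_eq (hf : IsLambdaLabeling G f) :
    labHoles G f = unusedLabels (lambdaNum G) f := by
  obtain ⟨a, ha⟩ := hf.exists_eq_zero
  obtain ⟨b, hb⟩ := hf.2.2
  ext h
  simp only [labHoles, Set.mem_ofPred_eq, Finset.mem_coe, mem_unusedLabels]
  refine ⟨fun ⟨_, _, hh⟩ => ⟨by omega, hh⟩, fun ⟨_, hh⟩ => ?_⟩
  have := hh a
  have := hh b
  exact ⟨by omega, by omega, hh⟩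

lemma IsLambdaLabeling.ncard_labHoles_add_card_image (hf : IsLambdaLabeling G f) :
    (labHoles G f).ncard + (Finset.univ.image f).card = lambdaNum G + 1 := by
  rw [hf.labHoles_eq, Set.ncard_coe_finset, card_unusedLabels_add_card_image hf.2.1]

lemma holeIndex_add_card (h : Fintype.card V ≤ lambdaNum G + 1) :
    holeIndex G + Fintype.card V = lambdaNum G + 1 := by
  obtain ⟨f, hf, hk⟩ := exists_isL21Labeling_le_lambdaNum G
  obtain ⟨g, hg, hgk, hinj⟩ := hf.exists_injective hk h
  have hgl : IsLambdaLabeling G g := hg.isLambdaLabeling hgk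
  have hcard := hgl.ncard_labHoles_add_card_image
  rw [Finset.card_image_of_injective _ hinj, Finset.card_univ] at hcard
  suffices IsLeast {k | ∃ f, IsLambdaLabeling G f ∧ (labHoles G f).ncard = k}
      (labHoles G g).ncard by
    rw [holeIndex, this.csInf_eq, hcard]
  refine ⟨⟨g, hgl, rfl⟩, ?_⟩
  rintro _ ⟨f', hf', rfl⟩
  have := hf'.ncard_labHoles_add_card_image
  have : (Finset.univ.image f').card ≤ Fintype.card V := Finset.card_image_le
  omega

lemma lambdaNum_add_two (h : Fintype.card V ≤ lambdaNum G + 1) :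
    lambdaNum G + 2 = Fintype.card V + pathCoverNumber Gᶜ := by
  obtain ⟨f, hf, hk⟩ := exists_isL21Labeling_le_lambdaNum G
  obtain ⟨g, hg, hgk, hinj⟩ := hf.exists_injective hk h
  have hle := hg.pathCoverNumber_compl_add_card_le hinj hgk
  have hge := lambdaNum_add_two_le G
  rw [Nat.card_eq_fintype_card] at hle hge
  omega

end LambdaNum

/-- **Theorem (Statement 18).** Let `G` be a graph on `n` vertices with
`λ(G) ≥ n − 1`.  Then `ρ(G) = P(Gᶜ) − 1`. -/
theorem holeIndex_eq_pathCoverNumber_complement {V : Type*} [Fintype V] [Nonempty V]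
    (G : SimpleGraph V) (h : (Fintype.card V : ℤ) - 1 ≤ lambdaNum G) :
    (holeIndex G : ℤ) = pathCoverNumber Gᶜ - 1 := by
  have hcard : Fintype.card V ≤ lambdaNum G + 1 := by omega
  have hρ := holeIndex_add_card hcard
  have hlam := lambdaNum_add_two hcard
  omega

end PaperPC
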